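/- Let X and Y be integral affine schemes of finite type over ℂ whose underlying topological spaces have the same (finite) Krull dimension. Let ρ : X → Y be a dominant morphism over ℂ, and let f : X → X and g : Y → Y be morphisms over ℂ such that ρ ∘ f = g ∘ ρ. If g is an isomorphism, then f is an isomorphism. -/

import Mathlib

/-!
Put `A = Γ(X, ⊤)`, `B = Γ(Y, ⊤)`, and let `φ : A → A` and `σ : B ≃ B` be the pullbacks along `f`
and `g`. As `ρ` is dominant, `B ⊆ A`, and `φ` restricts to `σ` on `B`. The equality of dimensions
says that `A` is algebraic over `B` (`isAlgebraic_of_ringKrullDim_eq`), and it remains to show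
that `φ` is bijective (`bijective_of_isAlgebraic`).

Injectivity: a nonzero ideal of `A`, such as a nonzero kernel of `φ`, meets `B` nontrivially, while
`σ` is injective. So `φ` extends to an endomorphism `Φ` of `K = Frac A`. It is `σ`-semilinear, and
`K` is finite over `Frac B`, so `Φ` is an automorphism of `K` (`surjective_of_semilinear`).

Surjectivity: the integral closure `C` of `B` in `K` is a finite `B`-module
(`finite_integralClosure`) and is stable under `Φ` and `Φ⁻¹`. Let `L ⊆ B` be the ideal of those `b`
such that every `a ∈ A` has `b ^ n * a ∈ C` for some `n`. It is nonzero, and `σ⁻¹ L ⊆ L`, whence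
`σ L = L` because `B` is noetherian. Choose `N` such that `L ^ N` multiplies a finite set `s` of
generators of the `B`-algebra `A` into `C`. Then `F = {x ∈ K | L ^ N * x ⊆ C}` is a noetherian
`B`-module containing `s` with `Φ⁻¹ F = F`. The submodule `M = F ∩ A` satisfies `M ⊆ Φ⁻¹ M`, so the
chain `M ⊆ Φ⁻¹ M ⊆ Φ⁻² M ⊆ ⋯` inside `F` is stationary. As `Φ` is bijective this gives `Φ⁻¹ M = M`
(`comap_le_of_le_comap`), so `Φ⁻¹ s ⊆ A`, that is, `s ⊆ φ(A)`.
-/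

open AlgebraicGeometry CategoryTheory

/-! ### A stationary chain of preimages -/

/-- If a submodule `M` of a noetherian module `F` satisfies `M ⊆ Φ⁻¹ M`, and `Φ⁻¹ F ⊆ F`, then the
increasing chain of iterated preimages `Φ⁻ⁿ M` is stationary, and surjectivity of `Φ` allows one to
cancel `Φ⁻ⁿ` in `Φ⁻ⁿ M = Φ⁻ⁿ (Φ⁻¹ M)`. -/
lemma comap_le_of_le_comap {B V : Type*} [CommRing B] [AddCommGroup V] [Module B V]
    {τ : B →+* B} [RingHomSurjective τ] (Φ : V →ₛₗ[τ] V) (hΦ : Function.Surjective Φ)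
    (M F : Submodule B V) [IsNoetherian B F] (hM : M ≤ M.comap Φ) (hMF : M ≤ F)
    (hF : F.comap Φ ≤ F) : M.comap Φ ≤ M := by
  set c : ℕ → Submodule B V := fun n => (Submodule.comap Φ)^[n] M with hc
  have hsucc : ∀ n, c (n + 1) = (c n).comap Φ := fun n => Function.iterate_succ_apply' _ _ _
  have hmono : Monotone c := by
    refine monotone_nat_of_le_succ fun n => ?_
    induction n with
    | zero => exact hM
    | succ n ih => rw [hsucc n, hsucc (n + 1)]; exact Submodule.comap_mono ih
  have hle : ∀ n, c n ≤ F := by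
    intro n
    induction n with
    | zero => exact hMF
    | succ n ih => rw [hsucc n]; exact (Submodule.comap_mono ih).trans hF
  obtain ⟨n, hn⟩ := monotone_stabilizes_iff_noetherian.mpr (inferInstance : IsNoetherian B F)
    ⟨fun n => (c n).comap F.subtype, fun i j h => Submodule.comap_mono (hmono h)⟩
  have hn1 : c n = c (n + 1) := by
    have := congrArg (Submodule.map F.subtype) (hn (n + 1) n.le_succ)
    change ((c n).comap F.subtype).map F.subtype = ((c (n + 1)).comap F.subtype).map F.subtype at this
    rwa [Submodule.map_comap_subtype, Submodule.map_comap_subtype, inf_eq_right.mpr (hle _),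
      inf_eq_right.mpr (hle _)] at this
  have hinj : Function.Injective (Submodule.comap Φ)^[n] :=
    (Submodule.comap_injective_of_surjective hΦ).iterate n
  have : M = M.comap Φ := hinj (by
    rw [← Function.iterate_succ_apply]; exact hn1)
  exact this.ge

/-! ### Dimension and transcendence degree -/

/-- Invariance of dimension under injective integral extensions: going up and incomparability. -/
lemma ringKrullDim_eq_of_isIntegral (R S : Type*) [CommRing R] [CommRing S] [Algebra R S]
    [Algebra.IsIntegral R S] [FaithfulSMul R S] : ringKrullDim R = ringKrullDim S := by
  apply le_antisymm
  · refine iSup_le fun l => ?_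
    obtain ⟨Q, -, hQ, hQl⟩ := Ideal.exists_ideal_over_prime_of_isIntegral
      (S := S) (RelSeries.head l).asIdeal ⊥ (by
        rw [Ideal.comap_bot_of_injective _ (FaithfulSMul.algebraMap_injective R S)]
        exact bot_le)
    have : Q.LiesOver (RelSeries.head l).asIdeal := ⟨hQl.symm⟩
    obtain ⟨L, hL, -⟩ := Ideal.exists_ltSeries_of_hasGoingUp l Q
    rw [← hL]
    exact le_iSup (fun p : LTSeries (PrimeSpectrum S) => ((p.length : ℕ∞) : WithBot ℕ∞)) L
  · refine Order.krullDim_le_of_strictMono (PrimeSpectrum.comap (algebraMap R S)) ?_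
    intro I J h
    exact Ideal.IsIntegral.comap_lt_comap h

/-- Noether normalization: both invariants are the number of variables of a polynomial subring over
which `R` is integral. -/
lemma exists_trdeg_eq_and_ringKrullDim_eq (k R : Type*) [Field k] [CommRing R] [IsDomain R]
    [Algebra k R] [Algebra.FiniteType k R] :
    ∃ n : ℕ, Algebra.trdeg k R = n ∧ ringKrullDim R = n := by
  obtain ⟨s, g, hinj, hInt⟩ := exists_integral_inj_algHom_of_fg k R
  refine ⟨s, ?_, ?_⟩
  · let := g.toRingHom.toAlgebra
    have : IsScalarTower k (MvPolynomial (Fin s) k) R :=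
      IsScalarTower.of_algebraMap_eq fun x => (g.commutes x).symm
    have : Algebra.IsIntegral (MvPolynomial (Fin s) k) R := ⟨hInt⟩
    have : FaithfulSMul (MvPolynomial (Fin s) k) R :=
      (faithfulSMul_iff_algebraMap_injective _ _).mpr hinj
    have h := lift_trdeg_add_eq k (MvPolynomial (Fin s) k) R
    rw [trdeg_eq_zero (R := MvPolynomial (Fin s) k) (A := R)] at h
    simpa using h.symm
  · let := g.toRingHom.toAlgebra
    have : Algebra.IsIntegral (MvPolynomial (Fin s) k) R := ⟨hInt⟩
    have : FaithfulSMul (MvPolynomial (Fin s) k) R :=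
      (faithfulSMul_iff_algebraMap_injective _ _).mpr hinj
    rw [← ringKrullDim_eq_of_isIntegral (MvPolynomial (Fin s) k) R]
    simp

lemma isAlgebraic_of_ringKrullDim_eq (k B A : Type*) [Field k] [CommRing A] [CommRing B]
    [IsDomain A] [IsDomain B] [Algebra k A] [Algebra k B] [Algebra B A] [IsScalarTower k B A]
    [FaithfulSMul B A] [Algebra.FiniteType k A] [Algebra.FiniteType k B]
    (h : ringKrullDim A = ringKrullDim B) : Algebra.IsAlgebraic B A := by
  obtain ⟨n, hn, hn'⟩ := exists_trdeg_eq_and_ringKrullDim_eq k A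
  obtain ⟨m, hm, hm'⟩ := exists_trdeg_eq_and_ringKrullDim_eq k B
  obtain rfl : n = m := by
    rw [hn', hm'] at h
    exact_mod_cast h
  have key := lift_trdeg_add_eq k B A
  rw [hn, hm] at key
  rw [← trdeg_eq_zero_iff, ← Cardinal.lift_eq_zero]
  have : ((n : Cardinal) + Cardinal.lift (Algebra.trdeg B A)) = n + 0 := by simpa using key
  exact Cardinal.eq_of_add_eq_add_left this (Cardinal.natCast_lt_aleph0)

/-! ### The extension of fraction fields -/

/-- `Φ` maps a `Frac B`-basis of `K` to a linearly independent family of the same size, hence to a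
basis, and its range contains `Frac B`. -/
lemma surjective_of_semilinear {B K : Type*} [CommRing B] [IsDomain B] [Field K] [Algebra B K]
    [FaithfulSMul B K] [Algebra (FractionRing B) K] [IsScalarTower B (FractionRing B) K]
    [FiniteDimensional (FractionRing B) K] (σ : B ≃+* B) (Φ : K →+* K)
    (hΦ : ∀ b, Φ (algebraMap B K b) = algebraMap B K (σ b)) : Function.Surjective Φ := by
  let b := Module.finBasis (FractionRing B) K
  have hli : LinearIndependent (FractionRing B) (Φ ∘ b) := by
    rw [← LinearIndependent.iff_fractionRing B]
    refine ((LinearIndependent.iff_fractionRing B (FractionRing B)).mpr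
      b.linearIndependent).map_of_surjective_injective σ Φ.toAddMonoidHom σ.surjective
      (fun m hm => (map_eq_zero Φ).mp hm) fun r m => ?_
    simp [Algebra.smul_def, hΦ]
  have hspan := hli.span_eq_top_of_card_eq_finrank' (by simp)
  have hB : ∀ x : B, algebraMap B K x ∈ Φ.fieldRange :=
    fun x => ⟨algebraMap B K (σ.symm x), by simp [hΦ]⟩
  have hS : ∀ x : FractionRing B, algebraMap (FractionRing B) K x ∈ Φ.fieldRange := by
    intro x
    obtain ⟨p, q, -, rfl⟩ := IsFractionRing.div_surjective (A := B) x
    rw [map_div₀, ← IsScalarTower.algebraMap_apply, ← IsScalarTower.algebraMap_apply]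
    exact div_mem (hB p) (hB q)
  intro x
  have hx : x ∈ Submodule.span (FractionRing B) (Set.range (Φ ∘ b)) := hspan ▸ Submodule.mem_top
  change x ∈ Φ.fieldRange
  induction hx using Submodule.span_induction with
  | mem x h => obtain ⟨i, rfl⟩ := h; exact ⟨_, rfl⟩
  | zero => exact zero_mem _
  | add x y _ _ hx hy => exact add_mem hx hy
  | smul a x _ hx => rw [Algebra.smul_def]; exact mul_mem (hS a) hx

/-- Finiteness of the integral closure, by Noether normalization: the integral closure of `B` in `K`
is that of a polynomial ring over which `B` is finite. Polynomial rings are normal, and `K` is a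
finite separable extension of their fraction field in characteristic zero. -/
lemma finite_integralClosure (k B K : Type*) [Field k] [CharZero k] [CommRing B] [IsDomain B]
    [Algebra k B] [Algebra.FiniteType k B] [Field K] [Algebra k K] [Algebra B K]
    [IsScalarTower k B K] [FaithfulSMul B K] [Algebra.EssFiniteType k K]
    [Algebra.IsAlgebraic B K] : Module.Finite B (integralClosure B K) := by
  obtain ⟨s, g, hinj, hfin⟩ := exists_finite_inj_algHom_of_fg k B
  let P := MvPolynomial (Fin s) k
  let _ : Algebra P B := g.toRingHom.toAlgebra
  let _ : Algebra P K := ((algebraMap B K).comp (algebraMap P B)).toAlgebra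
  have : IsScalarTower P B K := IsScalarTower.of_algebraMap_eq fun _ => rfl
  have : IsScalarTower k P B := IsScalarTower.of_algebraMap_eq fun x => (g.commutes x).symm
  have : IsScalarTower k P K := IsScalarTower.of_algebraMap_eq fun x => by
    rw [IsScalarTower.algebraMap_apply P B K, ← IsScalarTower.algebraMap_apply k P B,
      ← IsScalarTower.algebraMap_apply k B K]
  have : Module.Finite P B := hfin
  have : FaithfulSMul P B := (faithfulSMul_iff_algebraMap_injective _ _).mpr hinj
  have hPK : Function.Injective (algebraMap P K) :=
    (FaithfulSMul.algebraMap_injective B K).comp hinj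
  have : FaithfulSMul P K := (faithfulSMul_iff_algebraMap_injective _ _).mpr hPK
  let _ : Algebra (FractionRing P) K := FractionRing.liftAlgebra P K
  have : IsScalarTower P (FractionRing P) K := inferInstance
  have : IsScalarTower k (FractionRing P) K := .to₁₃₄ k P (FractionRing P) K
  have : Algebra.IsAlgebraic P K := .trans P B K
  have : Algebra.IsAlgebraic (FractionRing P) K :=
    (IsFractionRing.comap_isAlgebraic_iff (A := P)).mp this
  have : Algebra.EssFiniteType (FractionRing P) K := .of_comp k (FractionRing P) K
  have : FiniteDimensional (FractionRing P) K :=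
    Algebra.finite_of_essFiniteType_of_isAlgebraic
  have : CharZero (FractionRing P) :=
    charZero_of_injective_algebraMap (algebraMap k (FractionRing P)).injective
  have : IsIntegralClosure (integralClosure B K) P K := by
    refine ⟨Subtype.val_injective, fun {x} => ⟨fun h => ⟨⟨x, h.tower_top⟩, rfl⟩, ?_⟩⟩
    rintro ⟨y, rfl⟩
    exact isIntegral_trans (R := P) (A := B) _ y.2
  have := IsIntegralClosure.finite P (FractionRing P) K (integralClosure B K)
  exact Module.Finite.of_restrictScalars_finite P B _

/-! ### Endomorphisms of algebraic extensions of domains -/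

/-- The algebraic form of the result: an endomorphism of `A` that restricts to an automorphism `σ`
of a subring `B` over which `A` is algebraic is itself an automorphism. -/
theorem bijective_of_isAlgebraic (k : Type*) {A B : Type*} [Field k] [CharZero k] [CommRing A]
    [CommRing B] [IsDomain A] [IsDomain B] [Algebra k A] [Algebra k B] [Algebra B A]
    [IsScalarTower k B A] [FaithfulSMul B A] [Algebra.FiniteType k A] [Algebra.FiniteType k B]
    [Algebra.IsAlgebraic B A] (φ : A →+* A) (σ : B ≃+* B)
    (h : ∀ b, φ (algebraMap B A b) = algebraMap B A (σ b)) : Function.Bijective φ := by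
  have hBA := FaithfulSMul.algebraMap_injective B A
  have hφ : Function.Injective φ := by
    rw [injective_iff_map_eq_zero]
    intro a ha
    by_contra ha0
    refine Ideal.comap_ne_bot_of_algebraic_mem (R := B) (I := RingHom.ker φ) ha0 ha
      (Algebra.IsAlgebraic.isAlgebraic a) ((eq_bot_iff).mpr fun b hb => ?_)
    rw [Ideal.mem_comap, RingHom.mem_ker, h, map_eq_zero_iff _ hBA] at hb
    simpa using hb
  refine ⟨hφ, ?_⟩
  let K := FractionRing A
  have hAK : Function.Injective (algebraMap A K) := IsFractionRing.injective A K
  have : FaithfulSMul B K := (faithfulSMul_iff_algebraMap_injective _ _).mpr <| by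
    rw [IsScalarTower.algebraMap_eq B A K]; exact hAK.comp hBA
  have : Algebra.IsAlgebraic B K := (IsFractionRing.isAlgebraic_iff' B A K).mp inferInstance
  let _ : Algebra (FractionRing B) K := FractionRing.liftAlgebra B K
  have : Algebra.EssFiniteType A K := .of_isLocalization K (nonZeroDivisors A)
  have : Algebra.EssFiniteType k K := .comp k A K
  have : IsScalarTower k (FractionRing B) K := .to₁₃₄ k B (FractionRing B) K
  have : Algebra.EssFiniteType (FractionRing B) K := .of_comp k (FractionRing B) K
  have : Algebra.IsAlgebraic (FractionRing B) K :=
    (IsFractionRing.comap_isAlgebraic_iff (A := B)).mp ‹_›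
  have : FiniteDimensional (FractionRing B) K := Algebra.finite_of_essFiniteType_of_isAlgebraic
  have : IsNoetherianRing B := Algebra.FiniteType.isNoetherianRing k B
  have := finite_integralClosure k B K
  let Φ : K →+* K := IsFractionRing.lift (g := (algebraMap A K).comp φ) (hAK.comp hφ)
  have hΦA : ∀ a, Φ (algebraMap A K a) = algebraMap A K (φ a) :=
    fun a => IsFractionRing.lift_algebraMap _ a
  have hΦB : ∀ b, Φ (algebraMap B K b) = algebraMap B K (σ b) := fun b => by
    rw [IsScalarTower.algebraMap_apply B A K, hΦA, h, ← IsScalarTower.algebraMap_apply]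
  have hΦsmul : ∀ (b : B) x, Φ (b • x) = σ b • Φ x := fun b x => by
    simp [Algebra.smul_def, hΦB]
  have hΦsurj : Function.Surjective Φ := surjective_of_semilinear σ Φ hΦB
  -- The integral closure of `B` in `K` is stable under `Φ` and its inverse.
  have hInt : ∀ x, IsIntegral B (Φ x) ↔ IsIntegral B x := by
    refine fun x => ⟨fun hx => ?_, fun hx => ?_⟩
    · let e := RingEquiv.ofBijective Φ ⟨Φ.injective, hΦsurj⟩
      have := hx.map_of_comp_eq (σ.symm : B →+* B) (e.symm : K →+* K) (by
        ext b
        apply Φ.injective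
        have := e.apply_symm_apply (algebraMap B K b)
        change _ = Φ (e.symm (algebraMap B K b))
        change Φ (e.symm (algebraMap B K b)) = _ at this
        rw [this, RingHom.comp_apply, hΦB]
        simp)
      simpa using (e.symm_apply_apply x ▸ this : IsIntegral B x)
    · exact hx.map_of_comp_eq (σ : B →+* B) Φ (by ext b; simp [hΦB])
  -- `I x` is the ideal of denominators of `x` relative to the integral closure of `B`.
  let I : K → Ideal B := fun x =>
    (Subalgebra.toSubmodule (integralClosure B K)).comap (LinearMap.toSpanSingleton B K x)
  have hI : ∀ x b, b ∈ I x ↔ IsIntegral B (b • x) := fun x b => Iff.rfl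
  let L : Ideal B := ⨅ a : A, (I (algebraMap A K a)).radical
  have hLmem : ∀ b, b ∈ L ↔ ∀ a : A, ∃ n : ℕ, IsIntegral B (b ^ n • algebraMap A K a) := by
    intro b
    simp only [L, Ideal.mem_iInf, Ideal.mem_radical_iff, hI]
  have : Algebra.FiniteType B A := .of_restrictScalars_finiteType k B A
  obtain ⟨s, hs⟩ := this
  -- A common denominator `q` of the generators lies in `L`, so `L` is nonzero.
  obtain ⟨q, hq0, hqL⟩ : ∃ q : B, q ≠ 0 ∧ q ∈ L := by
    obtain ⟨q, hq0, hq⟩ := Algebra.IsAlgebraic.exists_integral_multiples B s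
    refine ⟨q, hq0, (hLmem q).mpr fun a => ?_⟩
    suffices H : ∃ n : ℕ, IsIntegral B (q ^ n • a) by
      obtain ⟨n, hn⟩ := H
      refine ⟨n, ?_⟩
      simpa using hn.map (IsScalarTower.toAlgHom B A K)
    have ha : a ∈ Algebra.adjoin B (s : Set A) := hs ▸ Algebra.mem_top
    induction ha using Algebra.adjoin_induction with
    | mem x hx => exact ⟨1, by simpa using hq x hx⟩
    | algebraMap r => exact ⟨0, by simpa using isIntegral_algebraMap⟩
    | add x y _ _ hx hy =>
      obtain ⟨n, hn⟩ := hx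
      obtain ⟨m, hm⟩ := hy
      refine ⟨n + m, ?_⟩
      rw [smul_add]
      refine IsIntegral.add ?_ ?_
      · rw [add_comm, pow_add, mul_smul]; exact hn.smul _
      · rw [pow_add, mul_smul]; exact hm.smul _
    | mul x y _ _ hx hy =>
      obtain ⟨n, hn⟩ := hx
      obtain ⟨m, hm⟩ := hy
      refine ⟨n + m, ?_⟩
      rw [pow_add, ← smul_mul_smul_comm]
      exact hn.mul hm
  have hLsymm : ∀ b ∈ L, σ.symm b ∈ L := by
    intro b hb
    rw [hLmem] at hb ⊢
    intro a
    obtain ⟨n, hn⟩ := hb (φ a)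
    refine ⟨n, (hInt _).mp ?_⟩
    rwa [hΦsmul, map_pow, σ.apply_symm_apply, hΦA]
  -- `L` is carried into itself by `σ.symm`; the ascending chain condition in `B` gives the same
  -- for `σ`.
  have hLσ : L.map (σ : B →+* B) ≤ L := by
    rw [Ideal.map_le_iff_le_comap]
    let Ψ : B →ₛₗ[(σ.symm : B →+* B)] B :=
      { toFun := σ.symm, map_add' := map_add _, map_smul' := fun a b => by simp }
    have := comap_le_of_le_comap Ψ σ.symm.surjective L ⊤ hLsymm le_top le_top
    intro b hb
    refine this ?_
    change σ.symm (σ b) ∈ L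
    simpa using hb
  have hLσ' : L.map (σ.symm : B →+* B) ≤ L := Ideal.map_le_iff_le_comap.mpr hLsymm
  obtain ⟨N, hN⟩ : ∃ N : ℕ, ∀ a ∈ s, L ^ N ≤ I (algebraMap A K a) := by
    choose n hn using fun a : A => Ideal.exists_pow_le_of_le_radical_of_fg
      (iInf_le (fun a : A => (I (algebraMap A K a)).radical) a) (IsNoetherian.noetherian L)
    exact ⟨s.sup n, fun a ha => (Ideal.pow_le_pow_right (Finset.le_sup ha)).trans (hn a)⟩
  have hLN : ∀ b ∈ L ^ N, σ b ∈ L ^ N := fun b hb =>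
    Ideal.pow_right_mono hLσ N (Ideal.map_pow (σ : B →+* B) L N ▸ Ideal.mem_map_of_mem _ hb)
  have hLN' : ∀ b ∈ L ^ N, σ.symm b ∈ L ^ N := fun b hb =>
    Ideal.pow_right_mono hLσ' N
      (Ideal.map_pow (σ.symm : B →+* B) L N ▸ Ideal.mem_map_of_mem _ hb)
  let F : Submodule B K :=
    { carrier := {x | ∀ b ∈ L ^ N, IsIntegral B (b • x)}
      zero_mem' := fun b _ => by simpa using isIntegral_zero
      add_mem' := fun hx hy b hb => by rw [smul_add]; exact (hx b hb).add (hy b hb)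
      smul_mem' := fun c x hx b hb => by rw [smul_comm]; exact (hx b hb).smul c }
  -- Multiplication by `q ^ N` embeds `F` into the integral closure, a finite `B`-module.
  have : IsNoetherian B F := by
    let m : F →ₗ[B] integralClosure B K :=
      { toFun := fun x => ⟨q ^ N • (x : K), x.2 _ (Ideal.pow_mem_pow hqL N)⟩
        map_add' := fun x y => Subtype.ext (smul_add _ _ _)
        map_smul' := fun c x => Subtype.ext (smul_comm _ _ _) }
    refine isNoetherian_of_injective m fun x y hxy => Subtype.ext ?_
    have := congrArg Subtype.val hxy
    exact smul_right_injective K (pow_ne_zero N hq0) this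
  let M : Submodule B K := F ⊓ LinearMap.range (IsScalarTower.toAlgHom B A K).toLinearMap
  let Φl : K →ₛₗ[(σ : B →+* B)] K :=
    { toFun := Φ, map_add' := map_add Φ, map_smul' := hΦsmul }
  -- Here `σ.symm` preserves `L ^ N`, so `Φ` preserves `F`; it also preserves the image of `A`.
  have hM : M ≤ M.comap Φl := by
    rintro x ⟨hx, a, rfl⟩
    refine ⟨fun b hb => ?_, φ a, (hΦA a).symm⟩
    have := (hInt _).mpr (hx _ (hLN' b hb))
    rwa [hΦsmul, σ.apply_symm_apply] at this
  have hF : F.comap Φl ≤ F := by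
    intro x hx b hb
    rw [← hInt, hΦsmul]
    exact hx _ (hLN b hb)
  have hMle := comap_le_of_le_comap Φl hΦsurj M F hM inf_le_left hF
  intro a
  change a ∈ φ.range
  have ha : a ∈ Algebra.adjoin B (s : Set A) := hs ▸ Algebra.mem_top
  induction ha using Algebra.adjoin_induction with
  | mem a ha =>
    obtain ⟨x, hx⟩ := hΦsurj (algebraMap A K a)
    -- `a` lies in `M`, hence so does its preimage `x` under `Φ`; in particular `x ∈ A`.
    have haM : Φl x ∈ M := by
      change Φ x ∈ M
      rw [hx]
      exact ⟨fun b hb => hN a ha hb, a, rfl⟩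
    obtain ⟨-, y, rfl⟩ := hMle haM
    exact ⟨y, hAK (by rw [← hΦA]; exact hx)⟩
  | algebraMap r => exact ⟨algebraMap B A (σ.symm r), by rw [h, σ.apply_symm_apply]⟩
  | add x y _ _ hx hy => exact add_mem hx hy
  | mul x y _ _ hx hy => exact mul_mem hx hy

/-! ### Passage to affine schemes -/

/-- Theorem B (ii).  Let `X`, `Y` be irreducible complex affine algebraic varieties
(integral affine schemes of finite type over `ℂ`) of the same finite dimension.  Let
`ρ : X → Y` be a dominant morphism over `ℂ` and `f : X → X`, `g : Y → Y` morphisms over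
`ℂ` with `ρ ∘ f = g ∘ ρ`.  If `g` is an isomorphism, so is `f`. -/
theorem endomorphism_isIso_of_base_isIso
    (X Y : Scheme) [IsAffine X] [IsAffine Y] [IsIntegral X] [IsIntegral Y]
    (sX : X ⟶ Spec (CommRingCat.of ℂ)) (sY : Y ⟶ Spec (CommRingCat.of ℂ))
    [LocallyOfFiniteType sX] [LocallyOfFiniteType sY]
    (hfin : topologicalKrullDim X.carrier ≠ ⊤)
    (hdim : topologicalKrullDim X.carrier = topologicalKrullDim Y.carrier)
    (ρ : X ⟶ Y) [IsDominant ρ] (hρ : ρ ≫ sY = sX)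
    (f : X ⟶ X) (hf : f ≫ sX = sX)
    (g : Y ⟶ Y) (hg : g ≫ sY = sY)
    (hcomm : f ≫ ρ = ρ ≫ g)
    [IsIso g] : IsIso f := by
  -- A dominant morphism to a reduced scheme is injective on functions.
  have hρinj : Function.Injective ρ.appTop := by
    have := IsSchemeTheoreticallyDominant.of_isDominant ρ
    exact ρ.app_injective ⊤
  -- The `ℂ`-algebra structures on the coordinate rings.
  let iX := (Scheme.ΓSpecIso (CommRingCat.of ℂ)).inv ≫ sX.appTop
  let iY := (Scheme.ΓSpecIso (CommRingCat.of ℂ)).inv ≫ sY.appTop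
  have hi : iY ≫ ρ.appTop = iX := by
    simp only [iX, iY, Category.assoc, ← Scheme.Hom.comp_appTop, hρ]
  have hiX : iX.hom.FiniteType := by
    have h := HasRingHomProperty.appTop @LocallyOfFiniteType sX inferInstance
    exact h.comp (RingHom.FiniteType.of_surjective _
      (ConcreteCategory.bijective_of_isIso (Scheme.ΓSpecIso (CommRingCat.of ℂ)).inv).2)
  have hiY : iY.hom.FiniteType := by
    have h := HasRingHomProperty.appTop @LocallyOfFiniteType sY inferInstance
    exact h.comp (RingHom.FiniteType.of_surjective _
      (ConcreteCategory.bijective_of_isIso (Scheme.ΓSpecIso (CommRingCat.of ℂ)).inv).2)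
  have hdimΓ : ∀ (Z : Scheme) [IsAffine Z],
      topologicalKrullDim Z.carrier = ringKrullDim Γ(Z, ⊤) := fun Z _ => by
    rw [← PrimeSpectrum.topologicalKrullDim_eq_ringKrullDim]
    exact IsHomeomorph.topologicalKrullDim_eq _ Z.isoSpec.hom.homeomorph.isHomeomorph
  let _ : Algebra ℂ Γ(X, ⊤) := iX.hom.toAlgebra
  let _ : Algebra ℂ Γ(Y, ⊤) := iY.hom.toAlgebra
  let _ : Algebra Γ(Y, ⊤) Γ(X, ⊤) := ρ.appTop.hom.toAlgebra
  have : IsScalarTower ℂ Γ(Y, ⊤) Γ(X, ⊤) :=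
    IsScalarTower.of_algebraMap_eq fun z => (ConcreteCategory.congr_hom hi z).symm
  have : FaithfulSMul Γ(Y, ⊤) Γ(X, ⊤) := (faithfulSMul_iff_algebraMap_injective _ _).mpr hρinj
  have : Algebra.FiniteType ℂ Γ(X, ⊤) := hiX
  have : Algebra.FiniteType ℂ Γ(Y, ⊤) := hiY
  have : Algebra.IsAlgebraic Γ(Y, ⊤) Γ(X, ⊤) :=
    isAlgebraic_of_ringKrullDim_eq ℂ _ _ (by rw [← hdimΓ X, ← hdimΓ Y, hdim])
  have : IsIso g.appTop := inferInstanceAs (IsIso (g.app ⊤))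
  have hbij := bijective_of_isAlgebraic ℂ f.appTop.hom
    (asIso g.appTop).commRingCatIsoToRingEquiv fun b => by
      have := congrArg Scheme.Hom.appTop hcomm
      rw [Scheme.Hom.comp_appTop, Scheme.Hom.comp_appTop] at this
      exact ConcreteCategory.congr_hom this b
  have : IsIso f.appTop := (ConcreteCategory.isIso_iff_bijective f.appTop).mpr hbij
  have : IsIso (f ≫ X.isoSpec.hom) := by
    rw [← Scheme.isoSpec_hom_naturality f]
    infer_instance
  exact IsIso.of_isIso_comp_right f X.isoSpec.hom
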